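/- arXiv:1107.3672 — 2 statements merged into one kernel-verified Lean document; each statement's English description precedes it below -/
import Mathlib

section
/- Let r, d, s, π be integers with r ≥ 4, r−1 ≤ s ≤ 2r−4, 0 ≤ π ≤ π₀ := s−r+1, and d ≥ (2s+1)(s+1). Set π₀' := (s+1)−r+1. Then h_{r,d,s+1,π₀'} > h_{r,d,s,π}, i.e. h_{r,d,s+1,π₀'}(i) ≥ h_{r,d,s,π}(i) for every i ≥ 1 with strict inequality for some i; consequently G*(r,d,s+1,π₀',0) < G*(r,d,s,π, −binom(π₀−π+1, 2)). -/
/-!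
Write `m' = (d-1)/(s+1)`, `π₀ = s-r+1` and `π₀' = π₀+1`; since `d > 2π₀'(s+1)`, we have
`m' ≥ 2π₀'`. For `1 ≤ i ≤ m'` both functions are given by their linear formulas, and
`h_{r,d,s+1,π₀'}(i) - h_{r,d,s,π}(i) = max(0, i - (π₀-π+1))`, which is positive at `i = m'`.
For `i > m'` the two functions are separated by `min(d, 1+is)`: it bounds `h_{r,d,s,π}` from above
because `π ≥ 0`, and `h_{r,d,s+1,π₀'}` from below because `m' ≥ 2π₀'`.

The inequality for `G*` follows by summation, because
`∑_{i ≥ 1} (d - h_{r,d,s,π}(i)) = G*(r,d,s,π,-binom(π₀-π+1,2))`; for `s+1` and `π₀'` the binomial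
correction is zero.
-/

open scoped BigOperators

noncomputable section

/-- The homogeneous coordinate ring of `ℙ^{n-1}` over `ℂ`: polynomials in `n` variables. -/
abbrev MPoly (n : ℕ) : Type := MvPolynomial (Fin n) ℂ

/-- An ideal is homogeneous if it contains all homogeneous components of its members. -/
def IsHomogIdeal {n : ℕ} (I : Ideal (MPoly n)) : Prop :=
  ∀ f ∈ I, ∀ k : ℕ, MvPolynomial.homogeneousComponent k f ∈ I

/-- The degree-`k` graded piece of the homogeneous coordinate ring of the subscheme `V(I)`. -/
def degQ {n : ℕ} (I : Ideal (MPoly n)) (k : ℕ) : Submodule ℂ (MPoly n ⧸ I) :=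
  (MvPolynomial.homogeneousSubmodule (Fin n) ℂ k).map (Ideal.Quotient.mkₐ ℂ I).toLinearMap

/-- The graded pieces, indexed by `ℤ` (zero in negative degrees). -/
def degQZ {n : ℕ} (I : Ideal (MPoly n)) (t : ℤ) : Submodule ℂ (MPoly n ⧸ I) :=
  if 0 ≤ t then degQ I t.toNat else ⊥

/-- The Hilbert function of the closed subscheme `V(I) ⊆ ℙ^{n-1}`. -/
def hilbNat {n : ℕ} (I : Ideal (MPoly n)) (t : ℤ) : ℕ :=
  Module.finrank ℂ (degQZ I t)

/-- The Hilbert function, as an integer-valued function. -/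
def hilbZ {n : ℕ} (I : Ideal (MPoly n)) (t : ℤ) : ℤ := (hilbNat I t : ℤ)

/-- The irrelevant maximal ideal `(x_0, …, x_{n-1})`. -/
def mId (n : ℕ) : Ideal (MPoly n) := Ideal.span (Set.range MvPolynomial.X)

/-- The space of degree-`t` graded module homomorphisms `m^k → R/I`. -/
def gradedHomSub {n : ℕ} (I : Ideal (MPoly n)) (k : ℕ) (t : ℤ) :
    Submodule ℂ ((mId n ^ k : Ideal (MPoly n)) →ₗ[MPoly n] (MPoly n ⧸ I)) where
  carrier := {φ | ∀ (j : ℕ) (f : MPoly n) (hf : f ∈ mId n ^ k),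
    f ∈ MvPolynomial.homogeneousSubmodule (Fin n) ℂ j → φ ⟨f, hf⟩ ∈ degQZ I ((j : ℤ) + t)}
  add_mem' := by
    intro a b ha hb j f hf hj
    simpa using Submodule.add_mem _ (ha j f hf hj) (hb j f hf hj)
  zero_mem' := by
    intro j f hf hj
    simpa using Submodule.zero_mem _
  smul_mem' := by
    intro c φ hφ j f hf hj
    simpa using Submodule.smul_mem _ c (hφ j f hf hj)

/-- `h⁰(X, 𝒪_X(t))` for `X = V(I)`: the stable value of the dimensions of the graded Hom
modules `Hom(m^k, R/I)_t` (the Deligne formula for twisted global sections). -/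
def h0Nat {n : ℕ} (I : Ideal (MPoly n)) (t : ℤ) : ℕ :=
  ⨆ k : ℕ, Module.finrank ℂ (gradedHomSub I k t)

/-- `h¹(ℙ^{n-1}, 𝓘_X(t)) = h⁰(X, 𝒪_X(t)) − h_X(t)` (valid for the saturated ideal of `X`). -/
def h1INat {n : ℕ} (I : Ideal (MPoly n)) (t : ℤ) : ℕ := h0Nat I t - hilbNat I t

/-- The dimension over `ℂ` of the Hartshorne–Rao module `M(X) = ⊕_t H¹(ℙ, 𝓘_X(t))`. -/
def raoDim {n : ℕ} (I : Ideal (MPoly n)) : ℕ := ∑ᶠ t : ℤ, h1INat I t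

/-- Arithmetically Cohen–Macaulay (for an integral curve): the Hartshorne–Rao module vanishes. -/
def IsACM {n : ℕ} (I : Ideal (MPoly n)) : Prop := ∀ t : ℤ, h0Nat I t = hilbNat I t

/-- Saturation of an ideal with respect to the irrelevant maximal ideal. -/
def satIdeal {n : ℕ} (I : Ideal (MPoly n)) : Ideal (MPoly n) where
  carrier := {f | ∃ k : ℕ, ∀ j : Fin n, MvPolynomial.X j ^ k * f ∈ I}
  zero_mem' := ⟨0, fun j => by simpa using I.zero_mem⟩
  add_mem' := by
    rintro f g ⟨k, hk⟩ ⟨l, hl⟩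
    refine ⟨k + l, fun j => ?_⟩
    have h1 : MvPolynomial.X (R := ℂ) j ^ (k + l) * (f + g)
        = MvPolynomial.X j ^ l * (MvPolynomial.X j ^ k * f)
          + MvPolynomial.X j ^ k * (MvPolynomial.X j ^ l * g) := by ring
    rw [h1]
    exact I.add_mem (I.mul_mem_left _ (hk j)) (I.mul_mem_left _ (hl j))
  smul_mem' := by
    rintro c f ⟨k, hk⟩
    refine ⟨k, fun j => ?_⟩
    have h1 : MvPolynomial.X (R := ℂ) j ^ k * (c • f) = c * (MvPolynomial.X j ^ k * f) := by
      rw [smul_eq_mul]; ring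
    rw [h1]
    exact I.mul_mem_left _ (hk j)

/-- The hyperplane section of `V(I)` by the hyperplane `{ℓ = 0}`, as a closed subscheme
(its saturated homogeneous ideal). -/
def sect {n : ℕ} (I : Ideal (MPoly n)) (ℓ : MPoly n) : Ideal (MPoly n) :=
  satIdeal (I ⊔ Ideal.span {ℓ})

/-- A property `P` holds for a *general* `k`-tuple of linear forms (hyperplanes): it holds on a
nonempty Zariski-open subset of the space of coefficients. -/
def GenericForms (n k : ℕ) (P : (Fin k → MPoly n) → Prop) : Prop :=
  ∃ Q : MvPolynomial (Fin k × Fin n) ℂ, Q ≠ 0 ∧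
    ∀ c : Fin k → Fin n → ℂ, MvPolynomial.eval (fun p => c p.1 p.2) Q ≠ 0 →
      P fun t => ∑ j : Fin n, MvPolynomial.C (c t j) * MvPolynomial.X j

/-- `V(I) ⊆ ℙ^{n-1}` is nondegenerate: contained in no hyperplane. -/
def Nondeg {n : ℕ} (I : Ideal (MPoly n)) : Prop :=
  ∀ f ∈ MvPolynomial.homogeneousSubmodule (Fin n) ℂ 1, f ∈ I → f = 0

/-- `V(I)` is an integral curve: `I` homogeneous prime, with cone of Krull dimension 2. -/
def IsCurve {n : ℕ} (I : Ideal (MPoly n)) : Prop :=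
  IsHomogIdeal I ∧ I.IsPrime ∧ ringKrullDim (MPoly n ⧸ I) = 2

/-- `V(I)` is an integral surface: `I` homogeneous prime, with cone of Krull dimension 3. -/
def IsSurface {n : ℕ} (I : Ideal (MPoly n)) : Prop :=
  IsHomogIdeal I ∧ I.IsPrime ∧ ringKrullDim (MPoly n ⧸ I) = 3

/-- The curve `V(I)` has degree `d` and arithmetic genus `g`: its Hilbert polynomial is
`d·t + 1 − g`. -/
def CurveInv {n : ℕ} (I : Ideal (MPoly n)) (d g : ℤ) : Prop :=
  ∃ N : ℤ, ∀ t : ℤ, N ≤ t → hilbZ I t = d * t + 1 - g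

/-- The surface `V(I)` has degree `s`, sectional genus `π` and arithmetic genus `pa`:
its Hilbert polynomial is `s·choose(t+1, 2) + (1 − π)·t + 1 + pa`. -/
def SurfInv {n : ℕ} (I : Ideal (MPoly n)) (s π pa : ℤ) : Prop :=
  ∃ N : ℤ, ∀ t : ℤ, N ≤ t → hilbZ I t = s * (t * (t + 1) / 2) + (1 - π) * t + 1 + pa

/-- `V(IC)` is not contained in any integral surface of degree `< s`. -/
def NotInSurfDegLT {n : ℕ} (IC : Ideal (MPoly n)) (s : ℤ) : Prop :=
  ∀ (T : Ideal (MPoly n)) (s' π' pa' : ℤ), IsSurface T → SurfInv T s' π' pa' → s' < s →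
    ¬ T ≤ IC

/-- `V(IC)` is not contained in any integral surface of degree `s` with sectional genus `> π`. -/
def NotInSurfSecGT {n : ℕ} (IC : Ideal (MPoly n)) (s π : ℤ) : Prop :=
  ∀ (T : Ideal (MPoly n)) (π' pa' : ℤ), IsSurface T → SurfInv T s π' pa' → π < π' →
    ¬ T ≤ IC

/-- `V(IC)` is not contained in any integral surface of degree `s` with arithmetic genus `< p`. -/
def NotInSurfGenLT {n : ℕ} (IC : Ideal (MPoly n)) (s p : ℤ) : Prop :=
  ∀ (T : Ideal (MPoly n)) (π' pa' : ℤ), IsSurface T → SurfInv T s π' pa' → pa' < p →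
    ¬ T ≤ IC

/-- `binom2 z = z.choose 2` for integers. -/
def binom2 (z : ℤ) : ℤ := z * (z - 1) / 2

/-- The bound `G*(r,d,s,π,p)` of Di Gennaro–Franco, with `m = (d-1)/s`, `ε = (d-1) % s`. -/
def Gstar (r d s π p : ℤ) : ℤ :=
  binom2 ((d - 1) / s) * s + ((d - 1) / s) * ((d - 1) % s + π) - p
    + max 0 ((2 * π - (s - 1 - (d - 1) % s)) / 2)

/-- The numerical function `h_{r,d,s,π}`. -/
def hF (r d s π : ℤ) (i : ℤ) : ℤ :=
  if 1 ≤ i ∧ i ≤ (d - 1) / s then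
    1 - π + i * s - max 0 ((s - r + 1) - π - i + 1)
  else if i = (d - 1) / s + 1 then
    d - max 0 ((2 * π - (s - 1 - (d - 1) % s)) / 2)
  else if (d - 1) / s + 2 ≤ i then d
  else 0

/-- The threshold `d₀(r)`. -/
def d0 (r : ℤ) : ℤ :=
  if r ≤ 6 then 16 * (r - 2) * (2 * r - 3)
  else if r ≤ 11 then 8 * (r - 2) ^ 3
  else 2 ^ (r.toNat + 1)

end
noncomputable section

/-- The affine cone of `V(I)`: common zeroes of the elements of `I`. -/
def zeroCone {n : ℕ} (I : Ideal (MPoly n)) : Set (Fin n → ℂ) :=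
  {a | ∀ f ∈ I, MvPolynomial.eval a f = 0}

/-- Jacobian-criterion smoothness: at every nonzero point of the affine cone (of dimension `c`)
the gradients of the equations span a subspace of dimension `n - c`. -/
def IsSmooth {n : ℕ} (I : Ideal (MPoly n)) (c : ℕ) : Prop :=
  ∀ a ∈ zeroCone I, a ≠ 0 →
    Module.finrank ℂ (Submodule.span ℂ
      {g : Fin n → ℂ | ∃ f ∈ I, g = fun j => MvPolynomial.eval a (MvPolynomial.pderiv j f)})
      = n - c

/-- Castelnuovo's bound for the genus of a nondegenerate integral curve of degree `d`
in `ℙ^R`. -/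
def castelG (R d : ℤ) : ℤ :=
  binom2 ((d - 1) / (R - 1)) * (R - 1) + ((d - 1) / (R - 1)) * ((d - 1) % (R - 1))

/-- The ideal of the projective cone (from `ℙ^{n-1}` to `ℙ^n`) over `V(I)`. -/
def coneIdeal {n : ℕ} (I : Ideal (MPoly n)) : Ideal (MPoly (n + 1)) :=
  Ideal.map (MvPolynomial.rename (Fin.castSucc : Fin n → Fin (n + 1))) I

/-- `J` is the (saturated homogeneous) ideal of a line in `ℙ^{n-1}`: it is generated by
`n - 2` linearly independent linear forms. -/
def IsLineIdeal {n : ℕ} (J : Ideal (MPoly n)) : Prop :=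
  ∃ V : Submodule ℂ (MPoly n), V ≤ MvPolynomial.homogeneousSubmodule (Fin n) ℂ 1 ∧
    Module.finrank ℂ V = n - 2 ∧ J = Ideal.span (V : Set (MPoly n))

/-- `V(T) ⊆ ℙ^{n-1}` is a smooth rational normal scroll surface: a smooth nondegenerate
integral surface of minimal degree `n - 2` (with sectional and arithmetic genus `0`)
containing a line (which rules out the Veronese surface). -/
def IsSmoothRNScroll {n : ℕ} (T : Ideal (MPoly n)) : Prop :=
  IsSurface T ∧ Nondeg T ∧ IsSmooth T 3 ∧ SurfInv T ((n : ℤ) - 2) 0 0 ∧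
    ∃ J : Ideal (MPoly n), IsLineIdeal J ∧ T ≤ J

/-- The linear projection on points determined by the matrix `L`. -/
def projPt {nb ns : ℕ} (L : Fin ns → Fin nb → ℂ) (a : Fin nb → ℂ) : Fin ns → ℂ :=
  fun t => ∑ j, L t j * a j

/-- The substitution algebra homomorphism determined by the matrix `L` (pullback of the
linear projection `ℙ^{nb-1} ⇢ ℙ^{ns-1}`). -/
def substHom {nb ns : ℕ} (L : Fin ns → Fin nb → ℂ) : MPoly ns →ₐ[ℂ] MPoly nb :=
  MvPolynomial.aeval fun t => ∑ j, MvPolynomial.C (L t j) * MvPolynomial.X j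

/-- The linear projection given by `L` maps `V(I')` isomorphically onto `V(I)`: the center of
projection misses `V(I')`, `V(I)` is the image, and the projection is (projectively) bijective
from `V(I')` onto `V(I)`. -/
def IsIsoProjection {nb ns : ℕ} (L : Fin ns → Fin nb → ℂ)
    (I' : Ideal (MPoly nb)) (I : Ideal (MPoly ns)) : Prop :=
  I = I'.comap (substHom L) ∧
  (∀ a ∈ zeroCone I', a ≠ 0 → projPt L a ≠ 0) ∧
  (∀ a ∈ zeroCone I', ∀ b ∈ zeroCone I', a ≠ 0 → b ≠ 0 →
    (∃ c : ℂ, c ≠ 0 ∧ projPt L a = c • projPt L b) → ∃ c : ℂ, c ≠ 0 ∧ a = c • b) ∧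
  (∀ y ∈ zeroCone I, y ≠ 0 → ∃ a ∈ zeroCone I', a ≠ 0 ∧ ∃ c : ℂ, c ≠ 0 ∧ y = c • projPt L a)

/-- `t` bounds the Castelnuovo–Mumford regularity of the surface `V(I) ⊆ ℙ^{n-1}`:
for every `t' ≥ t`, `H^i(ℙ, 𝓘(t'-i)) = 0` for all `i ≥ 1`, expressed through the standard
inductive characterization by successive general hyperplane sections. -/
def IsRegBound {n : ℕ} (I : Ideal (MPoly n)) (t : ℤ) : Prop :=
  GenericForms n 2 fun L => ∀ t' : ℤ, t ≤ t' →
    h1INat I (t' - 1) = 0 ∧ h1INat (sect I (L 0)) (t' - 1) = 0 ∧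
      h1INat (sect (sect I (L 0)) (L 1)) (t' - 1) = 0

end

theorem ediv_le_ediv_left_of_le {a b c : ℤ} (ha : 0 ≤ a) (hb : 0 < b) (hbc : b ≤ c) :
    a / c ≤ a / b := by
  have hc : 0 < c := hb.trans_le hbc
  refine (Int.le_ediv_iff_mul_le hb).mpr ?_
  calc
    a / c * b ≤ a / c * c := mul_le_mul_of_nonneg_left hbc (Int.ediv_nonneg ha hc.le)
    _ ≤ a := Int.ediv_mul_le a hc.ne'

theorem binom2_add_one (z : ℤ) : binom2 (z + 1) = binom2 z + z := by
  rw [binom2, binom2, ← Int.add_mul_ediv_right _ _ two_ne_zero]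
  congr 1
  ring

theorem sum_range_sub_add_one_eq_binom2 (n : ℕ) :
    ∑ i ∈ Finset.range n, ((n : ℤ) - (i + 1)) = binom2 n := by
  induction n with
  | zero => rfl
  | succ n ih =>
    rw [Finset.sum_range_succ', Nat.cast_succ, binom2_add_one, ← ih]
    simp

theorem sum_range_max_sub_eq_binom2 {c n : ℕ} (h : c ≤ n) :
    ∑ i ∈ Finset.range n, max 0 ((c : ℤ) - i) = binom2 (c + 1) := by
  induction c generalizing n with
  | zero => exact Finset.sum_eq_zero fun i _ ↦ by simp
  | succ c ih =>
    obtain ⟨n, rfl⟩ := Nat.exists_eq_succ_of_ne_zero (Nat.ne_zero_of_lt h)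
    have hc : 0 ≤ (c : ℤ) + 1 := by omega
    rw [Finset.sum_range_succ', Nat.cast_succ, binom2_add_one, ← ih (Nat.le_of_succ_le_succ h)]
    simp [hc]

section hF

variable {r d s π i : ℤ}

theorem hF_of_le_ediv (h1 : 1 ≤ i) (hi : i ≤ (d - 1) / s) :
    hF r d s π i = 1 - π + i * s - max 0 ((s - r + 1) - π - i + 1) :=
  if_pos ⟨h1, hi⟩

theorem hF_ediv_add_one :
    hF r d s π ((d - 1) / s + 1) = d - max 0 ((2 * π - (s - 1 - (d - 1) % s)) / 2) := by
  rw [hF, if_neg (by omega), if_pos rfl]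

theorem hF_of_ediv_add_one_lt (hi : (d - 1) / s + 1 < i) : hF r d s π i = d := by
  rw [hF, if_neg (by omega), if_neg (by omega), if_pos (by omega)]

theorem hF_succ_sub_hF (h1 : 1 ≤ i) (hi : i ≤ (d - 1) / s) (hi' : i ≤ (d - 1) / (s + 1)) :
    hF r d (s + 1) (s + 1 - r + 1) i - hF r d s π i = max 0 (i - (s - r + 1 - π + 1)) := by
  rw [hF_of_le_ediv h1 hi, hF_of_le_ediv h1 hi', mul_add]
  omega

theorem hF_le_min (hs : 0 < s) (hπ : 0 ≤ π) (h1 : 1 ≤ i) :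
    hF r d s π i ≤ min d (1 + i * s) := by
  have hlt : d - 1 < ((d - 1) / s + 1) * s := Int.lt_ediv_add_one_mul_self _ hs
  rcases lt_trichotomy i ((d - 1) / s + 1) with hi | rfl | hi
  · have hle : i * s ≤ d - 1 := (Int.le_ediv_iff_mul_le hs).mp (by omega)
    rw [hF_of_le_ediv h1 (by omega)]
    omega
  · rw [hF_ediv_add_one]
    omega
  · have hmul : ((d - 1) / s + 1) * s ≤ i * s := by gcongr
    rw [hF_of_ediv_add_one_lt hi]
    omega

theorem min_le_hF_succ (hπ : 2 * π ≤ (d - 1) / (s + 1) + 1) (hi : (d - 1) / (s + 1) < i) :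
    min d (1 + i * s) ≤ hF r d (s + 1) π i := by
  rcases (Int.add_one_le_of_lt hi).eq_or_lt with rfl | hi
  · have hcorr : max 0 ((2 * π - (s + 1 - 1 - (d - 1) % (s + 1))) / 2)
        ≤ max 0 (d - (1 + ((d - 1) / (s + 1) + 1) * s)) := by
      have hgap : d - (1 + ((d - 1) / (s + 1) + 1) * s)
          = (d - 1) / (s + 1) + (d - 1) % (s + 1) - s := by
        linear_combination -Int.ediv_mul_add_emod (d - 1) (s + 1)
      omega
    rw [hF_ediv_add_one]
    omega
  · rw [hF_of_ediv_add_one_lt hi]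
    exact min_le_left _ _

theorem sum_range_sub_hF {m : ℕ} (hm : (d - 1) / s = m) (hπ : π ≤ s - r + 1)
    (hπm : s - r + 1 - π ≤ m) :
    ∑ j ∈ Finset.range m, (d - hF r d s π (j + 1))
      = binom2 m * s + m * ((d - 1) % s + π) + binom2 (s - r + 1 - π + 1) := by
  obtain ⟨c, hc⟩ := Int.eq_ofNat_of_zero_le (sub_nonneg.mpr hπ)
  have hdiv := Int.ediv_mul_add_emod (d - 1) s
  have hterm : ∀ j ∈ Finset.range m, d - hF r d s π (j + 1)
      = ((m : ℤ) - (j + 1)) * s + ((d - 1) % s + π) + max 0 ((c : ℤ) - j) := by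
    intro j hj
    have hjm := Finset.mem_range.mp hj
    rw [hF_of_le_ediv (by omega) (by omega),
      show s - r + 1 - π - ((j : ℤ) + 1) + 1 = c - j by omega]
    rw [hm] at hdiv
    linear_combination -hdiv
  rw [Finset.sum_congr rfl hterm, Finset.sum_add_distrib, Finset.sum_add_distrib,
    ← Finset.sum_mul, sum_range_sub_add_one_eq_binom2, sum_range_max_sub_eq_binom2 (by omega), hc]
  simp

theorem hasSum_sub_hF (hπ : π ≤ s - r + 1) (hπm : s - r + 1 - π ≤ (d - 1) / s) :
    HasSum (fun j : ℕ ↦ d - hF r d s π (j + 1)) (Gstar r d s π (-binom2 (s - r + 1 - π + 1))) := by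
  obtain ⟨m, hm⟩ := Int.eq_ofNat_of_zero_le ((sub_nonneg.mpr hπ).trans hπm)
  have hsum : ∑ j ∈ Finset.range (m + 1), (d - hF r d s π (j + 1))
      = Gstar r d s π (-binom2 (s - r + 1 - π + 1)) := by
    rw [Finset.sum_range_succ, sum_range_sub_hF hm hπ (hm ▸ hπm), ← hm, hF_ediv_add_one, Gstar]
    ring
  rw [← hsum]
  refine hasSum_sum_of_ne_finset_zero fun j hj ↦ ?_
  have hmj : m < j := by simpa using hj
  rw [hF_of_ediv_add_one_lt (by omega), sub_self]

theorem Gstar_lt_Gstar_of_hF {r' s' π' : ℤ}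
    (hπ : π ≤ s - r + 1) (hπm : s - r + 1 - π ≤ (d - 1) / s)
    (hπ' : π' ≤ s' - r' + 1) (hπm' : s' - r' + 1 - π' ≤ (d - 1) / s')
    (hle : ∀ i, 1 ≤ i → hF r d s π i ≤ hF r' d s' π' i)
    (hlt : ∃ i, 1 ≤ i ∧ hF r d s π i < hF r' d s' π' i) :
    Gstar r' d s' π' (-binom2 (s' - r' + 1 - π' + 1))
      < Gstar r d s π (-binom2 (s - r + 1 - π + 1)) := by
  obtain ⟨i, hi, hlt⟩ := hlt
  obtain ⟨j, rfl⟩ := Int.le.dest hi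
  rw [add_comm] at hlt
  refine hasSum_lt (i := j) (fun k ↦ ?_) ?_ (hasSum_sub_hF hπ' hπm') (hasSum_sub_hF hπ hπm)
  · exact sub_le_sub_left (hle _ (by omega)) d
  · exact sub_lt_sub_left hlt d

end hF

theorem statement_10_general (r d s π : ℤ) (hs : 1 ≤ s) (hπ1 : 0 ≤ π) (hπ2 : π ≤ s - r + 1)
    (hd : 2 * (s - r + 2) * (s + 1) < d) :
    (∀ i : ℤ, 1 ≤ i → hF r d s π i ≤ hF r d (s + 1) (s + 1 - r + 1) i) ∧
    (∃ i : ℤ, 1 ≤ i ∧ hF r d s π i < hF r d (s + 1) (s + 1 - r + 1) i) ∧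
    Gstar r d (s + 1) (s + 1 - r + 1) 0
      < Gstar r d s π (-(binom2 (s - r + 1 - π + 1))) := by
  have hs' : 0 < s + 1 := by omega
  have hm' : 2 * (s - r + 2) ≤ (d - 1) / (s + 1) := (Int.le_ediv_iff_mul_le hs').mpr (by omega)
  have hd0 : 0 ≤ d - 1 := (Int.ediv_nonneg_iff_of_pos hs').mp (by omega)
  have hmm' : (d - 1) / (s + 1) ≤ (d - 1) / s :=
    ediv_le_ediv_left_of_le hd0 (by omega) (by omega)
  have hle : ∀ i : ℤ, 1 ≤ i → hF r d s π i ≤ hF r d (s + 1) (s + 1 - r + 1) i := by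
    intro i hi
    rcases le_or_gt i ((d - 1) / (s + 1)) with him' | him'
    · rw [← sub_nonneg, hF_succ_sub_hF hi (him'.trans hmm') him']
      exact le_max_left _ _
    · exact (hF_le_min (by omega) hπ1 hi).trans (min_le_hF_succ (by omega) him')
  have hlt : ∃ i : ℤ, 1 ≤ i ∧ hF r d s π i < hF r d (s + 1) (s + 1 - r + 1) i := by
    refine ⟨(d - 1) / (s + 1), by omega, ?_⟩
    rw [← sub_pos, hF_succ_sub_hF (by omega) hmm' le_rfl]
    exact lt_max_of_lt_right (by omega)
  refine ⟨hle, hlt, ?_⟩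
  simpa [binom2] using Gstar_lt_Gstar_of_hF hπ2 (by omega) le_rfl (by omega) hle hlt

/-- Lemma 3.2(3).  If `d ≥ (2s+1)(s+1)` then
`h_{r,d,s+1,π₀'} > h_{r,d,s,π}` (where `π₀' = (s+1)-r+1`), and consequently
`G*(r,d,s+1,π₀',0) < G*(r,d,s,π,-binom(π₀-π+1,2))`. -/
theorem statement_10 (r d s π : ℤ) (hr : 4 ≤ r)
    (hs1 : r - 1 ≤ s) (hs2 : s ≤ 2 * r - 4)
    (hπ1 : 0 ≤ π) (hπ2 : π ≤ s - r + 1)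
    (hd : (2 * s + 1) * (s + 1) ≤ d) :
    (∀ i : ℤ, 1 ≤ i → hF r d s π i ≤ hF r d (s + 1) (s + 1 - r + 1) i) ∧
    (∃ i : ℤ, 1 ≤ i ∧ hF r d s π i < hF r d (s + 1) (s + 1 - r + 1) i) ∧
    Gstar r d (s + 1) (s + 1 - r + 1) 0
      < Gstar r d s π (-(binom2 (s - r + 1 - π + 1))) := by
  exact statement_10_general r d s π (by omega) hπ1 hπ2 (by nlinarith)
end

section
/- Let S ⊂ P^r be an irreducible, reduced, nondegenerate projective surface of degree s and arithmetic genus p_a(S). Let Σ be the general hyperplane section of S and H the general hyperplane section of Σ. For each integer i set δ_i := Δh_Σ(i) − h_H(i) and μ_i := Δh_S(i) − h_Σ(i). Then p_a(S) = ∑_{i=1}^{∞} (i−1)(s − h_H(i)) − ∑_{i=1}^{∞} (i−1)δ_i + ∑_{i=1}^{∞} μ_i (all sums have finitely many nonzero terms). -/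
/-!
Saturating a homogeneous ideal changes its Hilbert function in finitely many degrees only, and a
general linear form `ℓ` avoids the associated primes of the saturation, so multiplication by `ℓ` is
injective in large degrees. Hence `h_Σ(t) = Δh_S(t)` for `t ≫ 0`.

That `h_H(t) = s` for `t ≫ 0` needs an open condition on the pair `(ℓ₁, ℓ₂)` jointly. The bound
`h_H(t) ≥ Δh_Σ(t) = s` holds for every `ℓ₂` once `ℓ₁` is general. For the other one, fix
`ℓ₁, ℓ₂, ℓ₃`, each general with respect to the previous ones, and a large degree `d` in which the
section by `ℓ₁, ℓ₂` has Hilbert function `s` and the section by `ℓ₁, ℓ₂, ℓ₃` has Hilbert function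
`0`. By semicontinuity of rank both values can only drop when `(ℓ₁, ℓ₂)` is replaced by a general
pair, with `ℓ₃` kept; and the vanishing of the second makes `h_H` nonincreasing from `d` on.

Finally, the three summands of the formula add up to the difference `ΔG` of
`G(i) = s·i(i+1)/2 − s·i − i·h_Σ(i) + h_S(i)`, which is `1 + p_a(S)` for `i ≫ 0` and `1` at `i = 0`.
-/

open scoped BigOperators

open MvPolynomial Filter

variable {n : ℕ}

/-- The linear form on `ℙ^{n-1}` with coefficient vector `c`, in the shape in which `GenericForms`
evaluates its argument. -/
noncomputable def linForm (c : Fin n → ℂ) : MPoly n := ∑ j, C (c j) * X j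

theorem linForm_isHomogeneous (c : Fin n → ℂ) : (linForm c).IsHomogeneous 1 :=
  IsHomogeneous.sum _ _ _ fun j _ => isHomogeneous_C_mul_X (c j) j

namespace GenericForms

variable {k : ℕ} {P P' : (Fin k → MPoly n) → Prop}

theorem mono (h : GenericForms n k P)
    (hPP' : ∀ L : Fin k → MPoly n, (∀ t, (L t).IsHomogeneous 1) → P L → P' L) :
    GenericForms n k P' :=
  let ⟨Q, hQ, hP⟩ := h
  ⟨Q, hQ, fun c hc => hPP' _ (fun t => linForm_isHomogeneous (c t)) (hP c hc)⟩

theorem forall_mem {ι : Type*} (s : Finset ι) {P : ι → (Fin k → MPoly n) → Prop}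
    (h : ∀ i ∈ s, GenericForms n k (P i)) : GenericForms n k fun L => ∀ i ∈ s, P i L := by
  choose! Q hQ hP using h
  refine ⟨∏ i ∈ s, Q i, Finset.prod_ne_zero_iff.mpr hQ, fun c hc i hi => hP i hi c ?_⟩
  rw [map_prod] at hc
  exact Finset.prod_ne_zero_iff.mp hc i hi

theorem and (h : GenericForms n k P) (h' : GenericForms n k P') :
    GenericForms n k fun L => P L ∧ P' L := by
  obtain ⟨Q, hQ, hP⟩ := h
  obtain ⟨Q', hQ', hP'⟩ := h'
  refine ⟨Q * Q', mul_ne_zero hQ hQ', fun c hc => ?_⟩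
  rw [map_mul] at hc
  exact ⟨hP c (left_ne_zero_of_mul hc), hP' c (right_ne_zero_of_mul hc)⟩

theorem exists_linForm (h : GenericForms n k P) :
    ∃ c : Fin k → Fin n → ℂ, P fun t => linForm (c t) := by
  obtain ⟨Q, hQ, hP⟩ := h
  obtain ⟨x, hx⟩ : ∃ x, eval x Q ≠ 0 := by
    by_contra! hx
    exact hQ (MvPolynomial.funext fun x => by rw [hx x, map_zero])
  exact ⟨fun t j => x (t, j), hP _ hx⟩

end GenericForms

/-! ### Graded pieces -/

section HomogeneousIdeals

attribute [local instance] MvPolynomial.gradedAlgebra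

theorem isHomogIdeal_iff_isHomogeneous {I : Ideal (MPoly n)} :
    IsHomogIdeal I ↔ I.IsHomogeneous (homogeneousSubmodule (Fin n) ℂ) := by
  refine ⟨fun h i f hf => ?_, fun h f hf i => homogeneousComponent_mem_of_mem h hf i⟩
  exact (decomposition.decompose'_apply f i).symm ▸ h f hf i

theorem IsHomogIdeal.sup_span {J : Ideal (MPoly n)} (hJ : IsHomogIdeal J) {s : Set (MPoly n)}
    {d : ℕ} (hs : ∀ f ∈ s, f.IsHomogeneous d) : IsHomogIdeal (J ⊔ Ideal.span s) := by
  rw [isHomogIdeal_iff_isHomogeneous] at hJ ⊢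
  exact hJ.sup (Ideal.homogeneous_span _ s fun f hf => ⟨d, hs f hf⟩)

theorem IsHomogIdeal.sup_span_singleton {J : Ideal (MPoly n)} (hJ : IsHomogIdeal J) {ℓ : MPoly n}
    {d : ℕ} (hℓ : ℓ.IsHomogeneous d) : IsHomogIdeal (J ⊔ Ideal.span {ℓ}) :=
  hJ.sup_span fun _ hf => Set.mem_singleton_iff.mp hf ▸ hℓ

theorem homogeneousComponent_add_mul {σ R : Type*} [CommSemiring R] {d : ℕ} {f : MvPolynomial σ R}
    (hf : f.IsHomogeneous d) (k : ℕ) (g : MvPolynomial σ R) :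
    homogeneousComponent (d + k) (f * g) = f * homogeneousComponent k g := by
  have h := DirectSum.coe_decompose_mul_add_of_left_mem (homogeneousSubmodule σ R)
    (b := g) (j := k) hf
  exact (decomposition.decompose'_apply (f * g) (d + k)).symm.trans
    (h.trans (congrArg (f * ·) (decomposition.decompose'_apply g k)))

end HomogeneousIdeals

theorem IsHomogIdeal.exists_sub_sum_mem {J : Ideal (MPoly n)} (hJ : IsHomogIdeal J) {κ : Type*}
    [Fintype κ] {L : κ → MPoly n} {e : ℕ} (hL : ∀ t, (L t).IsHomogeneous e) {d : ℕ} {f : MPoly n}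
    (hf : f.IsHomogeneous (e + d)) (hfJ : f ∈ J ⊔ Ideal.span (Set.range L)) :
    ∃ a : κ → homogeneousSubmodule (Fin n) ℂ d, f - ∑ t, L t * a t ∈ J := by
  obtain ⟨g, hg, h, hh, rfl⟩ := Submodule.mem_sup.mp hfJ
  obtain ⟨a, rfl⟩ := Ideal.mem_span_range_iff_exists_fun.mp hh
  refine ⟨fun t => ⟨homogeneousComponent d (a t), homogeneousComponent_mem d (a t)⟩, ?_⟩
  have hsum : ∑ t, L t * homogeneousComponent d (a t)
      = homogeneousComponent (e + d) (∑ t, a t * L t) := by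
    simp only [map_sum, mul_comm (a _), homogeneousComponent_add_mul (hL _)]
  rw [hsum, ← homogeneousComponent_eq_self hf, ← map_sub, add_sub_cancel_right]
  exact hJ g hg (e + d)

theorem finrank_map_add_finrank_inf_ker {K V W : Type*} [DivisionRing K] [AddCommGroup V]
    [Module K V] [AddCommGroup W] [Module K W] (p : Submodule K V) [FiniteDimensional K p]
    (f : V →ₗ[K] W) :
    Module.finrank K (p.map f) + Module.finrank K ↥(p ⊓ LinearMap.ker f) = Module.finrank K p := by
  rw [← LinearMap.finrank_range_add_finrank_ker (f.domRestrict p), LinearMap.range_domRestrict,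
    LinearMap.ker_domRestrict, ← Submodule.finrank_map_subtype_eq p, Submodule.map_comap_subtype]

instance finiteDimensional_homogeneousSubmodule (k : ℕ) :
    FiniteDimensional ℂ (homogeneousSubmodule (Fin n) ℂ k) :=
  Module.Finite.iff_fg.mpr (homogeneousSubmodule_fg (Fin n) ℂ k)

/-- The space `I_k` of forms of degree `k` in the ideal `I`. -/
noncomputable def degPart (I : Ideal (MPoly n)) (k : ℕ) : Submodule ℂ (MPoly n) :=
  homogeneousSubmodule (Fin n) ℂ k ⊓ I.restrictScalars ℂ

theorem mem_degPart {I : Ideal (MPoly n)} {k : ℕ} {f : MPoly n} :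
    f ∈ degPart I k ↔ f.IsHomogeneous k ∧ f ∈ I := Iff.rfl

theorem degPart_le (I : Ideal (MPoly n)) (k : ℕ) :
    degPart I k ≤ homogeneousSubmodule (Fin n) ℂ k := inf_le_left

theorem degPart_mono {I J : Ideal (MPoly n)} (h : I ≤ J) (k : ℕ) : degPart I k ≤ degPart J k :=
  inf_le_inf_left _ h

instance finiteDimensional_degPart (I : Ideal (MPoly n)) (k : ℕ) :
    FiniteDimensional ℂ (degPart I k) :=
  Submodule.finiteDimensional_of_le (degPart_le I k)

theorem finrank_degQ_add_finrank_degPart (I : Ideal (MPoly n)) (k : ℕ) :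
    Module.finrank ℂ (degQ I k) + Module.finrank ℂ (degPart I k)
      = Module.finrank ℂ (homogeneousSubmodule (Fin n) ℂ k) := by
  have hker : LinearMap.ker (Ideal.Quotient.mkₐ ℂ I).toLinearMap = I.restrictScalars ℂ := by
    ext f; exact Ideal.Quotient.eq_zero_iff_mem
  rw [← finrank_map_add_finrank_inf_ker (homogeneousSubmodule (Fin n) ℂ k)
    (Ideal.Quotient.mkₐ ℂ I).toLinearMap, hker]
  rfl

/-- The map `(R_d)^κ → R/J`, `a ↦ ∑ L_t a_t`, whose image measures the difference between the
Hilbert functions of `J` and `J + (L_t : t ∈ κ)`. -/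
noncomputable def mulForms (J : Ideal (MPoly n)) {κ : Type*} [Fintype κ] (L : κ → MPoly n) (d : ℕ) :
    (κ → homogeneousSubmodule (Fin n) ℂ d) →ₗ[ℂ] MPoly n ⧸ J :=
  (Ideal.Quotient.mkₐ ℂ J).toLinearMap ∘ₗ
    ∑ t, LinearMap.mulLeft ℂ (L t) ∘ₗ (homogeneousSubmodule (Fin n) ℂ d).subtype ∘ₗ
      LinearMap.proj t

theorem mulForms_apply (J : Ideal (MPoly n)) {κ : Type*} [Fintype κ] (L : κ → MPoly n) {d : ℕ}
    (a : κ → homogeneousSubmodule (Fin n) ℂ d) :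
    mulForms J L d a = Ideal.Quotient.mk J (∑ t, L t * a t) := by
  simp [mulForms]

theorem IsHomogIdeal.map_degPart_sup_span {J : Ideal (MPoly n)} (hJ : IsHomogIdeal J) {κ : Type*}
    [Fintype κ] {L : κ → MPoly n} {e : ℕ} (hL : ∀ t, (L t).IsHomogeneous e) (d : ℕ) :
    (degPart (J ⊔ Ideal.span (Set.range L)) (e + d)).map (Ideal.Quotient.mkₐ ℂ J).toLinearMap
      = LinearMap.range (mulForms J L d) := by
  ext x
  simp only [Submodule.mem_map, LinearMap.mem_range, mulForms_apply, mem_degPart]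
  constructor
  · rintro ⟨f, ⟨hf, hfJ⟩, rfl⟩
    obtain ⟨a, ha⟩ := hJ.exists_sub_sum_mem hL hf hfJ
    exact ⟨a, (Ideal.Quotient.eq.mpr ha).symm⟩
  · rintro ⟨a, rfl⟩
    refine ⟨∑ t, L t * a t, ⟨IsHomogeneous.sum _ _ _ fun t _ => (hL t).mul (a t).2, ?_⟩, rfl⟩
    exact sum_mem fun t _ => Ideal.mul_mem_right _ _
      (Ideal.mem_sup_right (Ideal.subset_span (Set.mem_range_self t)))

theorem IsHomogIdeal.finrank_degQ_sup_span {J : Ideal (MPoly n)} (hJ : IsHomogIdeal J)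
    {κ : Type*} [Fintype κ] {L : κ → MPoly n} {e : ℕ} (hL : ∀ t, (L t).IsHomogeneous e) (d : ℕ) :
    Module.finrank ℂ (degQ (J ⊔ Ideal.span (Set.range L)) (e + d))
        + Module.finrank ℂ (LinearMap.range (mulForms J L d))
      = Module.finrank ℂ (degQ J (e + d)) := by
  have hinf : degPart (J ⊔ Ideal.span (Set.range L)) (e + d)
      ⊓ LinearMap.ker (Ideal.Quotient.mkₐ ℂ J).toLinearMap = degPart J (e + d) := by
    ext f
    exact ⟨fun h => ⟨h.1.1, Ideal.Quotient.eq_zero_iff_mem.mp h.2⟩,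
      fun h => ⟨degPart_mono le_sup_left _ h, Ideal.Quotient.eq_zero_iff_mem.mpr h.2⟩⟩
  have hmap := finrank_map_add_finrank_inf_ker (degPart (J ⊔ Ideal.span (Set.range L)) (e + d))
    (Ideal.Quotient.mkₐ ℂ J).toLinearMap
  rw [hJ.map_degPart_sup_span hL, hinf] at hmap
  have := finrank_degQ_add_finrank_degPart J (e + d)
  have := finrank_degQ_add_finrank_degPart (J ⊔ Ideal.span (Set.range L)) (e + d)
  omega

theorem finrank_range_mulForms_const (J : Ideal (MPoly n)) (ℓ : MPoly n) (d : ℕ) :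
    Module.finrank ℂ (LinearMap.range (mulForms J (fun _ : Unit => ℓ) d))
      = Module.finrank ℂ (degQ (J.colon {ℓ}) d) := by
  set m := (Ideal.Quotient.mkₐ ℂ J).toLinearMap ∘ₗ LinearMap.mulLeft ℂ ℓ
  have hrange : LinearMap.range (mulForms J (fun _ : Unit => ℓ) d)
      = (homogeneousSubmodule (Fin n) ℂ d).map m := by
    ext x
    simp only [LinearMap.mem_range, Submodule.mem_map, mulForms_apply, Finset.univ_unique,
      Finset.sum_singleton]
    exact ⟨fun ⟨a, ha⟩ => ⟨a (), (a ()).2, ha⟩, fun ⟨f, hf, hx⟩ => ⟨fun _ => ⟨f, hf⟩, hx⟩⟩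
  have hker : LinearMap.ker m = (J.colon {ℓ}).restrictScalars ℂ := by
    ext f
    rw [Submodule.restrictScalars_mem, Submodule.mem_colon_singleton, smul_eq_mul, mul_comm]
    exact Ideal.Quotient.eq_zero_iff_mem
  have hmap := finrank_map_add_finrank_inf_ker (homogeneousSubmodule (Fin n) ℂ d) m
  rw [hker, ← hrange] at hmap
  exact Nat.add_right_cancel (hmap.trans (finrank_degQ_add_finrank_degPart (J.colon {ℓ}) d).symm)

/-! ### Hilbert functions -/

theorem hilbZ_natCast (I : Ideal (MPoly n)) (k : ℕ) :
    hilbZ I k = Module.finrank ℂ (degQ I k) := by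
  rw [hilbZ, hilbNat, degQZ, if_pos (Int.natCast_nonneg k), Int.toNat_natCast]

theorem hilbZ_eq_zero_iff {I : Ideal (MPoly n)} {k : ℕ} :
    hilbZ I k = 0 ↔ degPart I k = homogeneousSubmodule (Fin n) ℂ k := by
  have h := finrank_degQ_add_finrank_degPart I k
  rw [hilbZ_natCast, Nat.cast_eq_zero]
  refine ⟨fun h0 => Submodule.eq_of_le_of_finrank_eq (degPart_le I k) ?_, fun heq => ?_⟩
  · rwa [h0, zero_add] at h
  · rw [heq] at h
    exact Nat.add_eq_right.mp h

theorem hilbZ_congr {I J : Ideal (MPoly n)} {k : ℕ} (h : degPart I k = degPart J k) :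
    hilbZ I k = hilbZ J k := by
  have hI := finrank_degQ_add_finrank_degPart I k
  have hJ := finrank_degQ_add_finrank_degPart J k
  rw [hilbZ_natCast, hilbZ_natCast]
  rw [h] at hI
  omega

theorem hilbZ_eq_zero_of_le {I : Ideal (MPoly n)} {k : ℕ} (h : hilbZ I k = 0) {l : ℕ}
    (hkl : k ≤ l) : hilbZ I l = 0 := by
  obtain ⟨m, rfl⟩ := Nat.exists_eq_add_of_le hkl
  rw [hilbZ_eq_zero_iff] at h ⊢
  refine le_antisymm (degPart_le I _) (le_inf le_rfl ?_)
  rw [← homogeneousSubmodule_one_pow, pow_add, homogeneousSubmodule_one_pow, ← h, Submodule.mul_le]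
  exact fun f hf g _ => I.mul_mem_right g hf.2

theorem hilbZ_zero {I : Ideal (MPoly n)} (hI : I ≠ ⊤) : hilbZ I 0 = 1 := by
  have hbot : degPart I 0 = ⊥ := by
    rw [eq_bot_iff]
    rintro f ⟨hf, hfI⟩
    rw [SetLike.mem_coe, homogeneousSubmodule_zero, Submodule.mem_one] at hf
    obtain ⟨c, rfl⟩ := hf
    by_contra hc
    have hc0 : c ≠ 0 := by rintro rfl; exact hc (by simp)
    have hunit := (isUnit_iff_ne_zero.mpr hc0).map (algebraMap ℂ (MPoly n))
    exact hI (I.eq_top_of_isUnit_mem hfI hunit)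
  have hone : Module.finrank ℂ (homogeneousSubmodule (Fin n) ℂ 0) = 1 := by
    rw [homogeneousSubmodule_zero, Submodule.one_eq_span, finrank_span_singleton one_ne_zero]
  have h := finrank_degQ_add_finrank_degPart I 0
  rw [hbot, finrank_bot, add_zero, hone] at h
  exact_mod_cast (hilbZ_natCast I 0).trans (congrArg Nat.cast h)

theorem IsHomogIdeal.hilbZ_sup_span_add_hilbZ_colon {J : Ideal (MPoly n)} (hJ : IsHomogIdeal J)
    {ℓ : MPoly n} {e : ℕ} (hℓ : ℓ.IsHomogeneous e) (d : ℕ) :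
    hilbZ (J ⊔ Ideal.span {ℓ}) (e + d : ℕ) + hilbZ (J.colon {ℓ}) d = hilbZ J (e + d : ℕ) := by
  have h := hJ.finrank_degQ_sup_span (L := fun _ : Unit => ℓ) (fun _ => hℓ) d
  rw [Set.range_const, finrank_range_mulForms_const] at h
  simp only [hilbZ_natCast]
  exact_mod_cast h

theorem hilbZ_antitone {I J : Ideal (MPoly n)} (h : I ≤ J) (k : ℕ) : hilbZ J k ≤ hilbZ I k := by
  have hI := finrank_degQ_add_finrank_degPart I k
  have hJ := finrank_degQ_add_finrank_degPart J k
  have := Submodule.finrank_mono (degPart_mono h k)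
  rw [hilbZ_natCast, hilbZ_natCast]
  omega

theorem IsHomogIdeal.hilbZ_le_hilbZ_sup_span_add {J : Ideal (MPoly n)} (hJ : IsHomogIdeal J)
    {ℓ : MPoly n} {e : ℕ} (hℓ : ℓ.IsHomogeneous e) (d : ℕ) :
    hilbZ J (e + d : ℕ) ≤ hilbZ (J ⊔ Ideal.span {ℓ}) (e + d : ℕ) + hilbZ J d := by
  rw [← hJ.hilbZ_sup_span_add_hilbZ_colon hℓ]
  gcongr
  exact hilbZ_antitone Ideal.le_colon d

/-! ### Saturation -/

theorem le_satIdeal (J : Ideal (MPoly n)) : J ≤ satIdeal J :=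
  fun _ hf => ⟨0, fun _ => J.mul_mem_left _ hf⟩

theorem satIdeal_mono : Monotone (satIdeal (n := n)) :=
  fun _ _ h _ ⟨k, hk⟩ => ⟨k, fun j => h (hk j)⟩

theorem mem_satIdeal_iff_exists_pow {J : Ideal (MPoly n)} {f : MPoly n} :
    f ∈ satIdeal J ↔ ∀ j, ∃ k, X j ^ k * f ∈ J := by
  refine ⟨fun ⟨k, hk⟩ j => ⟨k, hk j⟩, fun h => ?_⟩
  choose k hk using h
  exact ⟨Finset.univ.sup k, fun j => J.mem_of_dvd
    (mul_dvd_mul_right (pow_dvd_pow _ (Finset.le_sup (Finset.mem_univ j))) f) (hk j)⟩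

theorem mem_satIdeal_iff_le_radical_colon {J : Ideal (MPoly n)} {f : MPoly n} :
    f ∈ satIdeal J ↔ idealOfVars (Fin n) ℂ ≤ (J.colon {f}).radical := by
  simp only [mem_satIdeal_iff_exists_pow, idealOfVars, Ideal.span_le, Set.range_subset_iff,
    SetLike.mem_coe, Ideal.mem_radical_iff, Submodule.mem_colon_singleton, smul_eq_mul]

theorem satIdeal_satIdeal (J : Ideal (MPoly n)) : satIdeal (satIdeal J) = satIdeal J := by
  refine le_antisymm (fun f ⟨k, hk⟩ => mem_satIdeal_iff_exists_pow.mpr fun j => ?_) (le_satIdeal _)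
  obtain ⟨l, hl⟩ := hk j
  exact ⟨l + k, by simpa only [pow_add, mul_assoc] using hl j⟩

theorem satIdeal_satIdeal_sup (J K : Ideal (MPoly n)) :
    satIdeal (satIdeal J ⊔ K) = satIdeal (J ⊔ K) := by
  refine le_antisymm ?_ (satIdeal_mono (sup_le_sup_right (le_satIdeal J) K))
  rw [← satIdeal_satIdeal (J ⊔ K)]
  exact satIdeal_mono
    (sup_le (satIdeal_mono le_sup_left) (le_sup_right.trans (le_satIdeal _)))

theorem exists_totalDegree_le_sub_mem_pow_idealOfVars {σ R : Type*} [Finite σ] [CommRing R]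
    (f : MvPolynomial σ R) (k : ℕ) :
    ∃ p : MvPolynomial σ R, p.totalDegree ≤ k ∧ f - p ∈ idealOfVars σ R ^ k := by
  refine ⟨(f : MvPowerSeries σ R).truncTotal (k + 1),
    Nat.le_of_lt_succ (MvPowerSeries.totalDegree_truncTotal_lt _ k.succ_ne_zero), ?_⟩
  refine Ideal.pow_le_pow_right k.le_succ ((mem_pow_idealOfVars_iff' _ _).mpr fun x hx => ?_)
  rw [coeff_sub, MvPowerSeries.coeff_truncTotal _ hx, coeff_coe, sub_self]

theorem exists_totalDegree_le_of_le_satIdeal {J : Ideal (MPoly n)} (K : Ideal (MPoly n))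
    (hK : K ≤ satIdeal J) : ∃ D : ℕ, ∀ f ∈ K, ∃ p, p.totalDegree ≤ D ∧ f - p ∈ J := by
  induction K, IsNoetherian.noetherian K using Submodule.fg_induction with
  | singleton g =>
    obtain ⟨k, hk⟩ := Ideal.exists_pow_le_of_le_radical_of_fg
      (mem_satIdeal_iff_le_radical_colon.mp (hK (Ideal.mem_span_singleton_self g)))
      (idealOfVars_fg (Fin n) ℂ)
    refine ⟨k + g.totalDegree, fun f hf => ?_⟩
    obtain ⟨a, rfl⟩ := Submodule.mem_span_singleton.mp hf
    obtain ⟨p, hpdeg, hp⟩ := exists_totalDegree_le_sub_mem_pow_idealOfVars a k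
    refine ⟨p * g, (totalDegree_mul p g).trans (by gcongr), ?_⟩
    rw [smul_eq_mul, ← sub_mul]
    exact Submodule.mem_colon_singleton.mp (hk hp)
  | sup K₁ K₂ _ _ ih₁ ih₂ =>
    obtain ⟨D₁, h₁⟩ := ih₁ (le_sup_left.trans hK)
    obtain ⟨D₂, h₂⟩ := ih₂ (le_sup_right.trans hK)
    refine ⟨max D₁ D₂, fun f hf => ?_⟩
    obtain ⟨f₁, hf₁, f₂, hf₂, rfl⟩ := Submodule.mem_sup.mp hf
    obtain ⟨p₁, hp₁, hJ₁⟩ := h₁ f₁ hf₁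
    obtain ⟨p₂, hp₂, hJ₂⟩ := h₂ f₂ hf₂
    refine ⟨p₁ + p₂, (totalDegree_add p₁ p₂).trans (max_le_max hp₁ hp₂), ?_⟩
    rw [add_sub_add_comm]
    exact J.add_mem hJ₁ hJ₂

theorem IsHomogIdeal.eventually_degPart_satIdeal_le {J : Ideal (MPoly n)} (hJ : IsHomogIdeal J) :
    ∀ᶠ k : ℕ in atTop, degPart (satIdeal J) k ≤ degPart J k := by
  obtain ⟨D, hD⟩ := exists_totalDegree_le_of_le_satIdeal (satIdeal J) le_rfl
  filter_upwards [eventually_gt_atTop D] with k hk f ⟨hf, hfJ⟩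
  obtain ⟨p, hp, hfp⟩ := hD f hfJ
  have hcomp := hJ _ hfp k
  rw [map_sub, homogeneousComponent_eq_self hf, homogeneousComponent_eq_zero k p (hp.trans_lt hk),
    sub_zero] at hcomp
  exact ⟨hf, hcomp⟩

theorem IsHomogIdeal.hilbZ_eventuallyEq_of_le_satIdeal {J K : Ideal (MPoly n)}
    (hJ : IsHomogIdeal J) (hJK : J ≤ K) (hK : K ≤ satIdeal J) :
    hilbZ K =ᶠ[atTop] hilbZ J := by
  rw [EventuallyEq, ← Nat.map_cast_int_atTop, eventually_map]
  filter_upwards [hJ.eventually_degPart_satIdeal_le] with k hk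
  exact hilbZ_congr (le_antisymm ((degPart_mono hK k).trans hk) (degPart_mono hJK k))

/-! ### General hyperplane sections -/

theorem linearMap_linForm {V : Type*} [AddCommGroup V] [Module ℂ V] (φ : MPoly n →ₗ[ℂ] V)
    (c : Fin n → ℂ) : φ (linForm c) = ∑ j, c j • φ (X j) := by
  simp only [linForm, C_mul', map_sum, map_smul]

theorem GenericForms.notMem {W : Submodule ℂ (MPoly n)} {j : Fin n} (hj : X j ∉ W) {k : ℕ}
    (i : Fin k) : GenericForms n k fun L => L i ∉ W := by
  obtain ⟨φ, hφj, hφ⟩ := Submodule.exists_le_ker_of_notMem hj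
  refine ⟨∑ m, C (φ (X m)) * X (i, m), fun hQ => hφj ?_, fun c hc hmem => hc ?_⟩
  · simpa [Pi.single_apply] using congrArg (eval (Pi.single (i, j) 1)) hQ
  · have hzero : φ (linForm (c i)) = 0 := hφ hmem
    rw [linearMap_linForm] at hzero
    simpa [mul_comm] using hzero

theorem exists_X_notMem_of_isAssociatedPrime {J P : Ideal (MPoly n)}
    (hP : IsAssociatedPrime P (MPoly n ⧸ satIdeal J)) : ∃ j, X j ∉ P := by
  obtain ⟨x, hx⟩ := hP.eq_radical_colon
  obtain ⟨f, rfl⟩ := Ideal.Quotient.mk_surjective x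
  have hcolon : (⊥ : Submodule (MPoly n) (MPoly n ⧸ satIdeal J)).colon
      {Ideal.Quotient.mk (satIdeal J) f} = (satIdeal J).colon {f} := by
    ext g
    simp only [Submodule.mem_colon_singleton, Submodule.mem_bot, smul_eq_mul]
    exact Ideal.Quotient.eq_zero_iff_mem
  rw [hcolon] at hx
  by_contra! hX
  have hvars : idealOfVars (Fin n) ℂ ≤ P := Ideal.span_le.mpr (Set.range_subset_iff.mpr hX)
  have hf : f ∈ satIdeal J := by
    rw [← satIdeal_satIdeal, mem_satIdeal_iff_le_radical_colon, ← hx]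
    exact hvars
  refine hP.toIsPrime.ne_top (hx.trans ?_)
  rw [Ideal.radical_eq_top, Submodule.colon_eq_top_iff_subset]
  simpa using hf

theorem GenericForms.colon_satIdeal_eq (J : Ideal (MPoly n)) {k : ℕ} (i : Fin k) :
    GenericForms n k fun L => (satIdeal J).colon {L i} = satIdeal J := by
  have hfin := associatedPrimes.finite (MPoly n) (MPoly n ⧸ satIdeal J)
  refine (GenericForms.forall_mem hfin.toFinset (P := fun P L => L i ∉ P.restrictScalars ℂ)
    fun P hP => ?_).mono fun L _ hL => le_antisymm (fun f hf => ?_) Ideal.le_colon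
  · obtain ⟨j, hj⟩ := exists_X_notMem_of_isAssociatedPrime (hfin.mem_toFinset.mp hP)
    exact GenericForms.notMem hj i
  · by_contra hfJ
    have hzd : L i ∈ {r : MPoly n | ∃ x : MPoly n ⧸ satIdeal J, x ≠ 0 ∧ r • x = 0} := by
      refine ⟨Ideal.Quotient.mk _ f, mt Ideal.Quotient.eq_zero_iff_mem.mp hfJ, ?_⟩
      rw [Submodule.mem_colon_singleton, smul_eq_mul, mul_comm] at hf
      exact Ideal.Quotient.eq_zero_iff_mem.mpr hf
    rw [← biUnion_associatedPrimes_eq_zero_divisors, Set.mem_iUnion₂] at hzd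
    obtain ⟨P, hP, hLP⟩ := hzd
    exact hL P (hfin.mem_toFinset.mpr hP) hLP

/-- The backward difference `Δf`, `Δf(t) = f(t) − f(t−1)`, of a function on the integers; for a
Hilbert function this is the paper's `Δh`. -/
def backwardDiff (f : ℤ → ℤ) (t : ℤ) : ℤ := f t - f (t - 1)

theorem backwardDiff_eventuallyEq {f g : ℤ → ℤ} (h : f =ᶠ[atTop] g) :
    backwardDiff f =ᶠ[atTop] backwardDiff g :=
  h.sub ((tendsto_atTop_add_const_right atTop (-1) tendsto_id).eventually h)

theorem IsHomogIdeal.genericForms_hilbZ_sup_span_eventuallyEq {J : Ideal (MPoly n)}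
    (hJ : IsHomogIdeal J) {k : ℕ} (i : Fin k) :
    GenericForms n k fun L =>
      hilbZ (J ⊔ Ideal.span {L i}) =ᶠ[atTop] backwardDiff (hilbZ J) := by
  refine (GenericForms.colon_satIdeal_eq J i).mono fun L hL hcolon => ?_
  have hle : J.colon {L i} ≤ satIdeal J :=
    (Submodule.colon_mono (le_satIdeal J) subset_rfl).trans hcolon.le
  have hev := hJ.hilbZ_eventuallyEq_of_le_satIdeal Ideal.le_colon hle
  rw [EventuallyEq, ← Nat.map_cast_int_atTop, eventually_map] at hev ⊢
  rw [← map_add_atTop_eq_nat 1, eventually_map]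
  filter_upwards [hev] with d hd
  have hsec := hJ.hilbZ_sup_span_add_hilbZ_colon (hL i) d
  rw [hd, add_comm 1 d] at hsec
  rw [backwardDiff, Nat.cast_succ, add_sub_cancel_right]
  exact eq_sub_of_add_eq hsec

/-! ### Semicontinuity -/

theorem exists_eval_eq_det_sum_smul {K V ι : Type*} [Field K] [AddCommGroup V] [Module K V]
    [FiniteDimensional K V] [Fintype ι] (A : ι → Module.End K V) :
    ∃ Q : MvPolynomial ι K, ∀ c, eval c Q = LinearMap.det (∑ i, c i • A i) := by
  let b := Module.finBasis K V
  refine ⟨(∑ i, (X i : MvPolynomial ι K) • (LinearMap.toMatrix b b (A i)).map C).det, fun c => ?_⟩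
  rw [← LinearMap.det_toMatrix b, RingHom.map_det]
  congr 1
  ext p q
  simp [LinearMap.toMatrix_apply, Matrix.sum_apply]

theorem exists_finrank_range_le_of_eval_ne_zero {K E V ι : Type*} [Field K] [AddCommGroup E]
    [Module K E] [FiniteDimensional K E] [AddCommGroup V] [Module K V] [Fintype ι]
    (T : ι → E →ₗ[K] V) (c₀ : ι → K) :
    ∃ Q : MvPolynomial ι K, Q ≠ 0 ∧ ∀ c, eval c Q ≠ 0 →
      Module.finrank K (LinearMap.range (∑ i, c₀ i • T i))
        ≤ Module.finrank K (LinearMap.range (∑ i, c i • T i)) := by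
  set f := ∑ i, c₀ i • T i
  obtain ⟨p, hp⟩ := (LinearMap.range f).subtype.exists_leftInverse_of_injective
    (LinearMap.range f).ker_subtype
  obtain ⟨S, hS⟩ := f.rangeRestrict.exists_rightInverse_of_surjective f.range_rangeRestrict
  obtain ⟨Q, hQ⟩ := exists_eval_eq_det_sum_smul fun i => p ∘ₗ T i ∘ₗ S
  replace hQ : ∀ c, eval c Q = LinearMap.det (p ∘ₗ (∑ i, c i • T i) ∘ₗ S) := by
    intro c
    rw [hQ]
    congr 1
    ext x
    simp
  refine ⟨Q, fun hQ0 => ?_, fun c hc => ?_⟩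
  · have hid : p ∘ₗ f ∘ₗ S = LinearMap.id := by
      rw [← hp, ← LinearMap.comp_id (LinearMap.range f).subtype, ← hS]
      rfl
    have hdet := hQ c₀
    rw [hQ0, map_zero, hid, LinearMap.det_id] at hdet
    exact zero_ne_one hdet
  · rw [hQ] at hc
    have hinj : Function.Injective ((∑ i, c i • T i) ∘ₗ S) :=
      .of_comp (f := p) (LinearMap.equivOfDetNeZero _ hc).injective
    rw [← LinearMap.finrank_range_of_inj hinj]
    exact Submodule.finrank_mono (LinearMap.range_comp_le_range _ _)

theorem mulForms_linForm (J : Ideal (MPoly n)) {κ : Type*} [Fintype κ] [DecidableEq κ]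
    (c : κ → Fin n → ℂ) (d : ℕ) :
    mulForms J (fun t => linForm (c t)) d
      = ∑ p : κ × Fin n, c p.1 p.2 • mulForms J (Pi.single p.1 (X p.2)) d := by
  refine LinearMap.ext fun a => ?_
  have hterm (t : κ) (j : Fin n) : c t j • mulForms J (Pi.single t (X j)) d a
      = Ideal.Quotient.mk J (C (c t j) * X j * (a t : MPoly n)) := by
    rw [mulForms_apply, Finset.sum_eq_single t (by simp +contextual) (by simp), Pi.single_eq_same,
      mul_assoc, C_mul']
    rfl
  simp only [LinearMap.sum_apply, LinearMap.smul_apply, hterm, Fintype.sum_prod_type]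
  simp only [mulForms_apply, linForm, Finset.sum_mul, map_sum]

theorem IsHomogIdeal.genericForms_hilbZ_sup_span_le {J : Ideal (MPoly n)} (hJ : IsHomogIdeal J)
    {k : ℕ} (c₀ : Fin k → Fin n → ℂ) (d : ℕ) :
    GenericForms n k fun L => hilbZ (J ⊔ Ideal.span (Set.range L)) (1 + d : ℕ)
      ≤ hilbZ (J ⊔ Ideal.span (Set.range fun t => linForm (c₀ t))) (1 + d : ℕ) := by
  obtain ⟨Q, hQ, hle⟩ := exists_finrank_range_le_of_eval_ne_zero
    (fun p : Fin k × Fin n => mulForms J (Pi.single p.1 (X p.2)) d) (fun p => c₀ p.1 p.2)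
  refine ⟨Q, hQ, fun c hc => ?_⟩
  specialize hle _ hc
  rw [← mulForms_linForm J c₀, ← mulForms_linForm J c] at hle
  have h₀ := hJ.finrank_degQ_sup_span (fun t => linForm_isHomogeneous (c₀ t)) d
  have h := hJ.finrank_degQ_sup_span (fun t => linForm_isHomogeneous (c t)) d
  rw [hilbZ_natCast, hilbZ_natCast, Nat.cast_le]
  change Module.finrank ℂ (degQ (J ⊔ Ideal.span (Set.range fun t => linForm (c t))) (1 + d)) ≤ _
  omega

/-! ### Double hyperplane sections -/

theorem sup_span_range_fin_two {R : Type*} [CommRing R] (J : Ideal R) (L : Fin 2 → R) :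
    J ⊔ Ideal.span (Set.range L) = J ⊔ Ideal.span {L 0} ⊔ Ideal.span {L 1} := by
  have hrange : Set.range L = {L 0, L 1} := by
    ext x
    simp only [Set.mem_range, Fin.exists_fin_two, Set.mem_insert_iff, Set.mem_singleton_iff,
      eq_comm]
  rw [hrange, Ideal.span_insert, sup_assoc]

theorem IsHomogIdeal.exists_linForm_hilbZ_sup_span_eventuallyEq {J : Ideal (MPoly n)}
    (hJ : IsHomogIdeal J) :
    ∃ c : Fin n → ℂ, hilbZ (J ⊔ Ideal.span {linForm c}) =ᶠ[atTop] backwardDiff (hilbZ J) :=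
  let ⟨c, hc⟩ := (hJ.genericForms_hilbZ_sup_span_eventuallyEq (0 : Fin 1)).exists_linForm
  ⟨c 0, hc⟩

theorem IsHomogIdeal.hilbZ_le_of_hilbZ_sup_span_eq_zero {J : Ideal (MPoly n)}
    (hJ : IsHomogIdeal J) {ℓ : MPoly n} (hℓ : ℓ.IsHomogeneous 1) {d : ℕ}
    (h : hilbZ (J ⊔ Ideal.span {ℓ}) d = 0) {l : ℕ} (hdl : d ≤ l) : hilbZ J l ≤ hilbZ J d := by
  induction l, hdl using Nat.le_induction with
  | base => exact le_rfl
  | succ l hdl ih =>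
    have hstep := hJ.hilbZ_le_hilbZ_sup_span_add hℓ l
    rw [add_comm 1 l, hilbZ_eq_zero_of_le h (hdl.trans l.le_succ), zero_add] at hstep
    exact hstep.trans ih

theorem IsHomogIdeal.genericForms_eventually_le_hilbZ {J : Ideal (MPoly n)} (hJ : IsHomogIdeal J)
    {s : ℤ} (hs : ∀ᶠ t in atTop, backwardDiff (backwardDiff (hilbZ J)) t = s) :
    GenericForms n 2 fun L =>
      ∀ᶠ t : ℤ in atTop, s ≤ hilbZ (J ⊔ Ideal.span (Set.range L)) t := by
  refine (hJ.genericForms_hilbZ_sup_span_eventuallyEq 0).mono fun L hL h => ?_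
  have hdiff : ∀ᶠ t : ℤ in atTop, backwardDiff (hilbZ (J ⊔ Ideal.span {L 0})) t = s :=
    (backwardDiff_eventuallyEq h).trans hs
  rw [← Nat.map_cast_int_atTop, ← map_add_atTop_eq_nat 1, eventually_map, eventually_map] at hdiff ⊢
  filter_upwards [hdiff] with d hd
  have hstep := (hJ.sup_span_singleton (hL 0)).hilbZ_le_hilbZ_sup_span_add (hL 1) d
  rw [backwardDiff, Nat.cast_succ, add_sub_cancel_right] at hd
  rw [← sup_span_range_fin_two, add_comm 1 d, Nat.cast_succ] at hstep
  rw [Nat.cast_succ]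
  linarith

theorem IsHomogIdeal.exists_flag_eventually_hilbZ {J : Ideal (MPoly n)} (hJ : IsHomogIdeal J)
    {s : ℤ} (hs : ∀ᶠ t in atTop, backwardDiff (backwardDiff (hilbZ J)) t = s) :
    ∃ (c : Fin 2 → Fin n → ℂ) (c' : Fin n → ℂ),
      (∀ᶠ t : ℤ in atTop, hilbZ (J ⊔ Ideal.span (Set.range fun i => linForm (c i))) t = s) ∧
      ∀ᶠ t : ℤ in atTop,
        hilbZ (J ⊔ Ideal.span (Set.range fun i => linForm (c i)) ⊔ Ideal.span {linForm c'}) t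
          = 0 := by
  obtain ⟨c₀, h₀⟩ := hJ.exists_linForm_hilbZ_sup_span_eventuallyEq
  have hJ₀ := hJ.sup_span_singleton (linForm_isHomogeneous c₀)
  obtain ⟨c₁, h₁⟩ := hJ₀.exists_linForm_hilbZ_sup_span_eventuallyEq
  have hJ₁ := hJ₀.sup_span_singleton (linForm_isHomogeneous c₁)
  obtain ⟨c₂, h₂⟩ := hJ₁.exists_linForm_hilbZ_sup_span_eventuallyEq
  have hdeg : hilbZ (J ⊔ Ideal.span {linForm c₀} ⊔ Ideal.span {linForm c₁}) =ᶠ[atTop] fun _ => s :=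
    h₁.trans ((backwardDiff_eventuallyEq h₀).trans hs)
  refine ⟨![c₀, c₁], c₂, ?_⟩
  simp only [sup_span_range_fin_two, Matrix.cons_val_zero, Matrix.cons_val_one]
  have hzero : backwardDiff (fun _ => s) = fun _ => 0 := funext fun _ => sub_self s
  exact ⟨hdeg, (h₂.trans (backwardDiff_eventuallyEq hdeg)).trans hzero.eventuallyEq⟩

theorem IsHomogIdeal.genericForms_eventually_hilbZ_le {J : Ideal (MPoly n)} (hJ : IsHomogIdeal J)
    {s : ℤ} (hs : ∀ᶠ t in atTop, backwardDiff (backwardDiff (hilbZ J)) t = s) :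
    GenericForms n 2 fun L =>
      ∀ᶠ t : ℤ in atTop, hilbZ (J ⊔ Ideal.span (Set.range L)) t ≤ s := by
  obtain ⟨c, c', hcc'⟩ := hJ.exists_flag_eventually_hilbZ hs
  rw [← eventually_and, ← Nat.map_cast_int_atTop, ← map_add_atTop_eq_nat 1, eventually_map,
    eventually_map] at hcc'
  obtain ⟨d, hc, hc'⟩ := hcc'.exists
  rw [sup_right_comm] at hc'
  have hJ' := hJ.sup_span_singleton (linForm_isHomogeneous c')
  have hsemi := (hJ.genericForms_hilbZ_sup_span_le c d).and (hJ'.genericForms_hilbZ_sup_span_le c d)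
  rw [add_comm 1 d, hc, hc'] at hsemi
  refine hsemi.mono fun L hL ⟨hA, hA'⟩ => ?_
  rw [sup_right_comm] at hA'
  have hzero := hA'.antisymm (Int.natCast_nonneg _)
  have hJL : IsHomogIdeal (J ⊔ Ideal.span (Set.range L)) :=
    hJ.sup_span (Set.forall_mem_range.mpr hL)
  rw [← Nat.map_cast_int_atTop, eventually_map]
  filter_upwards [eventually_ge_atTop (d + 1)] with l hl
  exact (hJL.hilbZ_le_of_hilbZ_sup_span_eq_zero (linForm_isHomogeneous c') hzero hl).trans hA

theorem IsHomogIdeal.genericForms_eventually_hilbZ_eq {J : Ideal (MPoly n)} (hJ : IsHomogIdeal J)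
    {s : ℤ} (hs : ∀ᶠ t in atTop, backwardDiff (backwardDiff (hilbZ J)) t = s) :
    GenericForms n 2 fun L =>
      ∀ᶠ t : ℤ in atTop, hilbZ (J ⊔ Ideal.span {L 0} ⊔ Ideal.span {L 1}) t = s := by
  refine ((hJ.genericForms_eventually_hilbZ_le hs).and
    (hJ.genericForms_eventually_le_hilbZ hs)).mono fun L _ ⟨hle, hge⟩ => ?_
  rw [← sup_span_range_fin_two]
  filter_upwards [hle, hge] with t using le_antisymm

/-! ### Summation by parts -/

theorem backwardDiff_triangular (t : ℤ) : backwardDiff (fun i => i * (i + 1) / 2) t = t := by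
  have h : t * (t + 1) = (t - 1) * (t - 1 + 1) + t * 2 := by ring
  rw [backwardDiff, h, Int.add_mul_ediv_right _ _ two_ne_zero, add_sub_cancel_left]

theorem backwardDiff_linear (s c : ℤ) : backwardDiff (fun t => s * t + c) = fun _ => s := by
  funext t
  rw [backwardDiff]
  ring

theorem backwardDiff_quadratic (s b c : ℤ) :
    backwardDiff (fun t => s * (t * (t + 1) / 2) + b * t + c) = fun t => s * t + b := by
  funext t
  have h := backwardDiff_triangular t
  rw [backwardDiff] at h ⊢
  linear_combination s * h

theorem finite_Ici_inter_support {M : Type*} [Zero M] {f : ℤ → M} (hf : ∀ᶠ i in atTop, f i = 0)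
    (a : ℤ) : (Set.Ici a ∩ Function.support f).Finite := by
  obtain ⟨N, hN⟩ := eventually_atTop.mp hf
  exact (Set.finite_Ico a N).subset fun i hi => ⟨hi.1, lt_of_not_ge fun hNi => hi.2 (hN i hNi)⟩

theorem finsum_mem_Ici_one_backwardDiff {G : ℤ → ℤ} {c : ℤ} (hG : ∀ᶠ i in atTop, G i = c) :
    ∑ᶠ i ∈ Set.Ici (1 : ℤ), backwardDiff G i = c - G 0 := by
  obtain ⟨m, hm⟩ := eventually_atTop.mp (tendsto_natCast_atTop_atTop.eventually hG)
  have hrange : Set.Ici (1 : ℤ) = Set.range fun k : ℕ => (k : ℤ) + 1 := by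
    ext i
    exact ⟨fun hi => ⟨(i - 1).toNat, by grind⟩, by grind⟩
  have hterm (k : ℕ) : backwardDiff G (k + 1) = G (k + 1 : ℕ) - G k := by
    rw [backwardDiff, add_sub_cancel_right, Nat.cast_succ]
  rw [hrange, finsum_mem_range fun k l hkl => by grind]
  simp only [hterm]
  rw [finsum_eq_sum_of_support_subset (s := Finset.range m), Finset.sum_range_sub fun k : ℕ => G k,
    hm m le_rfl, Nat.cast_zero]
  intro k hk
  by_contra hkm
  have hmk : m ≤ k := by simpa using hkm
  exact hk (by simp only [hm k hmk, hm (k + 1) (hmk.trans k.le_succ), sub_self])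

theorem eq_finsum_of_eventually {s b₀ c : ℤ} {a b h : ℤ → ℤ}
    (ha : a =ᶠ[atTop] fun t => s * (t * (t + 1) / 2) + b₀ * t + c)
    (hb : b =ᶠ[atTop] backwardDiff a) (hh : ∀ᶠ t in atTop, h t = s) :
    c - a 0 = (∑ᶠ i ∈ Set.Ici (1 : ℤ), (i - 1) * (s - h i))
        - (∑ᶠ i ∈ Set.Ici (1 : ℤ), (i - 1) * (backwardDiff b i - h i))
        + (∑ᶠ i ∈ Set.Ici (1 : ℤ), (backwardDiff a i - b i)) := by
  have hb' : b =ᶠ[atTop] fun t => s * t + b₀ :=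
    hb.trans (backwardDiff_quadratic s b₀ c ▸ backwardDiff_eventuallyEq ha)
  have hΔb : backwardDiff b =ᶠ[atTop] fun _ => s :=
    backwardDiff_linear s b₀ ▸ backwardDiff_eventuallyEq hb'
  have hA : ∀ᶠ i in atTop, (i - 1) * (s - h i) = 0 := hh.mono fun i hi => by
    rw [hi, sub_self, mul_zero]
  have hB : ∀ᶠ i in atTop, (i - 1) * (backwardDiff b i - h i) = 0 := by
    filter_upwards [hh, hΔb] with i hi hΔ
    rw [hi, hΔ, sub_self, mul_zero]
  have hC : ∀ᶠ i in atTop, backwardDiff a i - b i = 0 := hb.mono fun i hi => by rw [hi, sub_self]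
  -- Summation by parts: the three summands combine to `ΔG`.
  let G : ℤ → ℤ := fun i => s * (i * (i + 1) / 2) - s * i - i * b i + a i
  have hG : ∀ᶠ i in atTop, G i = c := by
    filter_upwards [ha, hb'] with i hai hbi
    have := Int.ediv_mul_cancel (Int.even_mul_succ_self i).two_dvd
    simp only [G, hai, hbi]
    linear_combination s * this
  have hsplit (i : ℤ) : (i - 1) * (s - h i) + (backwardDiff a i - b i)
      = backwardDiff G i + (i - 1) * (backwardDiff b i - h i) := by
    have := backwardDiff_triangular i
    simp only [backwardDiff, G] at this ⊢
    linear_combination (-s) * this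
  have hΔG : ∀ᶠ i in atTop, backwardDiff G i = 0 :=
    (backwardDiff_eventuallyEq hG).mono fun i hi => hi.trans (sub_self c)
  have hfin {f : ℤ → ℤ} (hf : ∀ᶠ i in atTop, f i = 0) := finite_Ici_inter_support hf 1
  have hsum := finsum_mem_congr rfl fun i (_ : i ∈ Set.Ici (1 : ℤ)) => hsplit i
  rw [finsum_mem_add_distrib' (hfin hA) (hfin hC), finsum_mem_add_distrib' (hfin hΔG) (hfin hB),
    finsum_mem_Ici_one_backwardDiff hG] at hsum
  have hG₀ : G 0 = a 0 := by simp [G]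
  linarith

theorem sect_sect (I : Ideal (MPoly n)) (ℓ ℓ' : MPoly n) :
    sect (sect I ℓ) ℓ' = satIdeal (I ⊔ Ideal.span {ℓ} ⊔ Ideal.span {ℓ'}) :=
  satIdeal_satIdeal_sup _ _

theorem IsHomogIdeal.hilbZ_satIdeal_eventuallyEq {J : Ideal (MPoly n)} (hJ : IsHomogIdeal J) :
    hilbZ (satIdeal J) =ᶠ[atTop] hilbZ J :=
  hJ.hilbZ_eventuallyEq_of_le_satIdeal (le_satIdeal J) le_rfl

theorem SurfInv.eventuallyEq {I : Ideal (MPoly n)} {s π pa : ℤ} (h : SurfInv I s π pa) :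
    hilbZ I =ᶠ[atTop] fun t => s * (t * (t + 1) / 2) + (1 - π) * t + (1 + pa) :=
  eventually_atTop.mpr (by simpa only [SurfInv, add_assoc] using h)

theorem SurfInv.eventually_backwardDiff_backwardDiff {I : Ideal (MPoly n)} {s π pa : ℤ}
    (h : SurfInv I s π pa) : ∀ᶠ t in atTop, backwardDiff (backwardDiff (hilbZ I)) t = s := by
  have := backwardDiff_eventuallyEq (backwardDiff_eventuallyEq h.eventuallyEq)
  rwa [backwardDiff_quadratic, backwardDiff_linear] at this

theorem statement_12_general (s π pa : ℤ) (I : Ideal (MPoly n)) (hI : IsHomogIdeal I)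
    (hne : I ≠ ⊤) (hinv : SurfInv I s π pa) :
    GenericForms n 2 fun L =>
      pa = (∑ᶠ i ∈ Set.Ici (1 : ℤ),
              (i - 1) * (s - hilbZ (sect (sect I (L 0)) (L 1)) i))
        - (∑ᶠ i ∈ Set.Ici (1 : ℤ),
              (i - 1) * ((hilbZ (sect I (L 0)) i - hilbZ (sect I (L 0)) (i - 1))
                - hilbZ (sect (sect I (L 0)) (L 1)) i))
        + (∑ᶠ i ∈ Set.Ici (1 : ℤ),
              ((hilbZ I i - hilbZ I (i - 1)) - hilbZ (sect I (L 0)) i)) := by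
  refine ((hI.genericForms_hilbZ_sup_span_eventuallyEq 0).and
    (hI.genericForms_eventually_hilbZ_eq hinv.eventually_backwardDiff_backwardDiff)).mono
    fun L hL ⟨hcurve, hpoints⟩ => ?_
  have hI₀ := hI.sup_span_singleton (hL 0)
  have hI₁ := hI₀.sup_span_singleton (hL 1)
  have hb : hilbZ (sect I (L 0)) =ᶠ[atTop] backwardDiff (hilbZ I) :=
    hI₀.hilbZ_satIdeal_eventuallyEq.trans hcurve
  have hh : ∀ᶠ t in atTop, hilbZ (sect (sect I (L 0)) (L 1)) t = s :=
    sect_sect I (L 0) (L 1) ▸ hI₁.hilbZ_satIdeal_eventuallyEq.trans hpoints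
  have hsum := eq_finsum_of_eventually hinv.eventuallyEq hb hh
  rwa [hilbZ_zero hne, add_sub_cancel_left] at hsum

/-- Lemma 3.4, first formula.  Let `S ⊆ ℙ^r` be an integral nondegenerate
surface of degree `s` and arithmetic genus `p_a(S)`, with general hyperplane section `Σ`, and
let `H` be the general hyperplane section of `Σ`.  With `δ_i = Δh_Σ(i) - h_H(i)` and
`μ_i = Δh_S(i) - h_Σ(i)`, one has
`p_a(S) = ∑_{i≥1} (i-1)(s - h_H(i)) - ∑_{i≥1} (i-1)δ_i + ∑_{i≥1} μ_i`. -/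
theorem statement_12 (r : ℕ) (s π pa : ℤ)
    (IS : Ideal (MPoly (r + 1)))
    (hsurf : IsSurface IS) (hnd : Nondeg IS) (hsinv : SurfInv IS s π pa) :
    GenericForms (r + 1) 2 fun L =>
      pa = (∑ᶠ i ∈ Set.Ici (1 : ℤ),
              (i - 1) * (s - hilbZ (sect (sect IS (L 0)) (L 1)) i))
        - (∑ᶠ i ∈ Set.Ici (1 : ℤ),
              (i - 1) * ((hilbZ (sect IS (L 0)) i - hilbZ (sect IS (L 0)) (i - 1))
                - hilbZ (sect (sect IS (L 0)) (L 1)) i))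
        + (∑ᶠ i ∈ Set.Ici (1 : ℤ),
              ((hilbZ IS i - hilbZ IS (i - 1)) - hilbZ (sect IS (L 0)) i)) :=
  statement_12_general s π pa IS hsurf.1 hsurf.2.1.ne_top hsinv
end
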